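/- arXiv:2412.10936 — 6 statements merged into one kernel-verified Lean document; each statement's English description precedes it below -/
import Mathlib

section
/- Let K be an algebraically closed field of characteristic zero and let n be a positive integer. Then every element of the general linear group GL_n(K) is a product of two diagonalizable matrices; that is, for every invertible n×n matrix M over K there exist invertible matrices S₁ and S₂, each conjugate to a diagonal matrix, with M = S₁ · S₂. -/
/-- A square matrix is diagonalizable (semisimple) if it is conjugate to a diagonal matrix. -/
def Matrix.IsDiagonalizable {n : ℕ} {K : Type*} [Field K]
    (M : Matrix (Fin n) (Fin n) K) : Prop :=
  ∃ P : (Matrix (Fin n) (Fin n) K)ˣ, ∃ d : Fin n → K,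
    M = (P : Matrix (Fin n) (Fin n) K) * Matrix.diagonal d *
      ((P⁻¹ : (Matrix (Fin n) (Fin n) K)ˣ) : Matrix (Fin n) (Fin n) K)

open Module

/-- Every endomorphism of a finite-dimensional space over an algebraically closed field is
upper triangular in some basis. -/
theorem Module.End.exists_basis_isUpperTriangular {K : Type*} [Field K] [IsAlgClosed K] (n : ℕ)
    {V : Type*} [AddCommGroup V] [Module K V] [FiniteDimensional K V] (hV : finrank K V = n)
    (f : End K V) :
    ∃ b : Basis (Fin n) K V, (LinearMap.toMatrix b b f).IsUpperTriangular := by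
  induction n generalizing V with
  | zero => exact ⟨finBasisOfFinrankEq K V hV, fun i => i.elim0⟩
  | succ n ih =>
    have : Nontrivial V := nontrivial_of_finrank_pos (R := K) (by omega)
    obtain ⟨μ, hμ⟩ := End.exists_eigenvalue f
    have hlt : LinearMap.range (f - algebraMap K (End K V) μ) < ⊤ := by
      rw [lt_top_iff_ne_top, Ne, ← LinearMap.ker_eq_bot_iff_range_eq_top,
        Algebra.algebraMap_eq_smul_one, ← End.eigenspace_def]
      exact hμ
    obtain ⟨φ, hφ, hle⟩ := Submodule.exists_le_ker_of_lt_top _ hlt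
    obtain ⟨y, hy⟩ : ∃ y, φ y ≠ 0 := by
      by_contra! h
      exact hφ (LinearMap.ext h)
    have hinv : ∀ x ∈ LinearMap.ker φ, f x ∈ LinearMap.ker φ := by
      intro x hx
      have h := hle ⟨x, rfl⟩
      simp only [LinearMap.mem_ker] at hx h ⊢
      simpa [hx] using h
    have hrank : finrank K (LinearMap.ker φ) = n := by
      have := Dual.finrank_ker_add_one_of_ne_zero hφ
      omega
    obtain ⟨b, hb⟩ := ih hrank (f.restrict hinv)
    let B : Basis (Fin (n + 1)) K V := b.mkFinSnoc y
      (by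
        intro c x hx h
        have h' := congrArg φ h
        rw [LinearMap.mem_ker] at hx
        simpa [hx, hy] using h')
      (fun z => ⟨-(φ z / φ y), by simp [hy]⟩)
    have hB (i : Fin n) : B i.castSucc = b i := by simp [B, Basis.coe_mkFinSnoc]
    have hrepr (x : LinearMap.ker φ) (i : Fin n) : B.repr (x : V) i.castSucc = b.repr x i := by
      have h : B.coord i.castSucc ∘ₗ (LinearMap.ker φ).subtype = b.coord i :=
        b.ext fun j => by simp [← hB, Finsupp.single_apply]
      exact LinearMap.congr_fun h x
    have hlast (x : LinearMap.ker φ) : B.repr (x : V) (Fin.last n) = 0 := by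
      have h : B.coord (Fin.last n) ∘ₗ (LinearMap.ker φ).subtype = 0 :=
        b.ext fun j => by simp [← hB, (Fin.castSucc_lt_last j).ne]
      exact LinearMap.congr_fun h x
    refine ⟨B, fun i j hij => ?_⟩
    rw [LinearMap.toMatrix_apply]
    cases j using Fin.lastCases with
    | last => exact absurd hij (Fin.le_last i).not_gt
    | cast j =>
      have hf : f (B j.castSucc) = (f.restrict hinv (b j) : V) := by simp [hB]
      rw [hf]
      cases i using Fin.lastCases with
      | last => exact hlast _
      | cast i =>
        rw [hrepr, ← LinearMap.toMatrix_apply]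
        exact hb (by simpa using hij)

namespace Matrix

variable {K : Type*} [Field K] {n : ℕ}

/-- A matrix is conjugate to the matrix of its associated linear map in any basis. -/
theorem exists_eq_conj_toMatrix (M : Matrix (Fin n) (Fin n) K) (b : Basis (Fin n) K (Fin n → K)) :
    ∃ P : (Matrix (Fin n) (Fin n) K)ˣ,
      M = (P : Matrix (Fin n) (Fin n) K) * LinearMap.toMatrix b b (toLin' M) *
        ((P⁻¹ : (Matrix (Fin n) (Fin n) K)ˣ) : Matrix (Fin n) (Fin n) K) := by
  let e := Pi.basisFun K (Fin n)
  refine ⟨⟨e.toMatrix b, b.toMatrix e, e.toMatrix_mul_toMatrix_flip b,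
    b.toMatrix_mul_toMatrix_flip e⟩, ?_⟩
  rw [Units.inv_mk, basis_toMatrix_mul_linearMap_toMatrix_mul_basis_toMatrix,
    ← LinearMap.toMatrix'_toLin' M]
  simp [e, LinearMap.toMatrix_eq_toMatrix']

theorem IsDiagonalizable.conj {M : Matrix (Fin n) (Fin n) K} (hM : M.IsDiagonalizable)
    (P : (Matrix (Fin n) (Fin n) K)ˣ) :
    ((P : Matrix (Fin n) (Fin n) K) * M *
      ((P⁻¹ : (Matrix (Fin n) (Fin n) K)ˣ) : Matrix (Fin n) (Fin n) K)).IsDiagonalizable := by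
  obtain ⟨Q, d, rfl⟩ := hM
  exact ⟨P * Q, d, by simp [mul_assoc]⟩

theorem isDiagonalizable_diagonal (d : Fin n → K) : (diagonal d).IsDiagonalizable :=
  ⟨1, d, by simp⟩

/-- An upper triangular matrix with distinct diagonal entries is diagonalizable. -/
theorem IsUpperTriangular.isDiagonalizable {M : Matrix (Fin n) (Fin n) K}
    (hM : M.IsUpperTriangular) (hd : Function.Injective fun i => M i i) :
    M.IsDiagonalizable := by
  have heig (i : Fin n) : End.HasEigenvalue (toLin' M) (M i i) := by
    rw [End.hasEigenvalue_iff_isRoot_charpoly, charpoly_toLin', charpoly_of_isUpperTriangular M hM,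
      Polynomial.IsRoot, Polynomial.eval_prod]
    exact Finset.prod_eq_zero (Finset.mem_univ i) (by simp)
  choose v hv using fun i => (heig i).exists_hasEigenvector
  let b := basisOfLinearIndependentOfCardEqFinrank' v
    (End.eigenvectors_linearIndependent' (toLin' M) _ hd v hv) (by simp)
  obtain ⟨P, hP⟩ := exists_eq_conj_toMatrix M b
  refine ⟨P, fun i => M i i, hP.trans ?_⟩
  congr 2
  ext i j
  have hb : toLin' M (b j) = M j j • b j := by simpa [b] using (hv j).apply_eq_smul
  rw [LinearMap.toMatrix_apply, hb, map_smul, b.repr_self, diagonal_apply]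
  by_cases h : i = j
  · simp [h]
  · simp [h]

end Matrix

/-- Every element of `GL n K` over an algebraically closed field of characteristic zero
is a product of two diagonalizable matrices. -/
theorem stmt0 (K : Type*) [Field K] [IsAlgClosed K] [CharZero K] (n : ℕ) (hn : 0 < n)
    (M : GL (Fin n) K) :
    ∃ S₁ S₂ : GL (Fin n) K,
      Matrix.IsDiagonalizable (S₁ : Matrix (Fin n) (Fin n) K) ∧
      Matrix.IsDiagonalizable (S₂ : Matrix (Fin n) (Fin n) K) ∧
      M = S₁ * S₂ := by
  obtain ⟨b, hb⟩ := End.exists_basis_isUpperTriangular n (by simp) (Matrix.toLin' M.val)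
  obtain ⟨P, hP⟩ := M.val.exists_eq_conj_toMatrix b
  set U := LinearMap.toMatrix b b (Matrix.toLin' M.val)
  have hMdet : M.val.det ≠ 0 := ((Matrix.isUnit_iff_isUnit_det _).1 M.isUnit).ne_zero
  have hU (i : Fin n) : U i i ≠ 0 := by
    have hdet : U.det ≠ 0 := by
      rwa [LinearMap.det_toMatrix, LinearMap.det_toLin']
    rw [Matrix.det_of_isUpperTriangular hb] at hdet
    exact Finset.prod_ne_zero_iff.1 hdet i (Finset.mem_univ i)
  let c : Fin n → K := fun i => (i : ℕ) + 1
  have hc (i : Fin n) : c i ≠ 0 := Nat.cast_add_one_ne_zero _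
  let D : (Matrix (Fin n) (Fin n) K)ˣ :=
    ⟨Matrix.diagonal fun i => U i i / c i, Matrix.diagonal fun i => c i / U i i,
      by simp [hU, hc], by simp [hU, hc]⟩
  have hS₁ : (P * D * P⁻¹).val.IsDiagonalizable :=
    (Matrix.isDiagonalizable_diagonal _).conj P
  have hdiag (i : Fin n) : (D⁻¹.val * U) i i = c i := by
    simp [D, hU]
  have hS₂ : (P.val * (D⁻¹.val * U) * P⁻¹.val).IsDiagonalizable := by
    refine Matrix.IsDiagonalizable.conj (Matrix.IsUpperTriangular.isDiagonalizable
      ((Matrix.blockTriangular_diagonal _).mul hb) fun i j hij => ?_) P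
    have h : c i = c j := (hdiag i).symm.trans (hij.trans (hdiag j))
    simpa [c, Fin.ext_iff] using h
  refine ⟨P * D * P⁻¹, (P * D * P⁻¹)⁻¹ * M, hS₁, ?_, by group⟩
  convert hS₂ using 1
  rw [Units.val_mul, hP]
  simp [mul_assoc]
end

section
/- Let K be an algebraically closed field of characteristic zero and let n be a positive integer. Then every element M of the symplectic group Sp_{2n}(K) (the group of 2n×2n matrices M over K with Mᵀ J M = J for the standard symplectic form J) is a product M = S₁ · S₂ of two elements S₁, S₂ of Sp_{2n}(K) each of which is diagonalizable as a matrix. -/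
open Matrix
/-- A square matrix is diagonalizable (semisimple) if it is conjugate to a diagonal matrix. -/
def Matrix.IsDiagonalizableSq {m : Type*} [Fintype m] [DecidableEq m] {K : Type*} [Field K]
    (M : Matrix m m K) : Prop :=
  ∃ P : (Matrix m m K)ˣ, ∃ d : m → K,
    M = (P : Matrix m m K) * Matrix.diagonal d * ((P⁻¹ : (Matrix m m K)ˣ) : Matrix m m K)

/-- The standard symplectic form on a space indexed by `Fin n ⊕ Fin n`. -/
def stdSymplecticJ (n : ℕ) (K : Type*) [Field K] :
    Matrix (Fin n ⊕ Fin n) (Fin n ⊕ Fin n) K :=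
  Matrix.fromBlocks 0 1 (-1) 0

/-- A matrix having pairwise distinct eigenvalues `e i`, indexed by its rows, is diagonalizable. -/
theorem Matrix.isDiagonalizableSq_of_isRoot_charpoly {m K : Type*} [Fintype m] [DecidableEq m]
    [Field K] {M : Matrix m m K} {e : m → K} (he : Function.Injective e)
    (hroot : ∀ i, M.charpoly.IsRoot (e i)) : M.IsDiagonalizableSq := by
  have hev : ∀ i, ∃ v, Module.End.HasEigenvector (Matrix.toLin' M) (e i) v := fun i =>
    ((Module.End.hasEigenvalue_iff_isRoot_charpoly _ _).2
      (by simpa using hroot i)).exists_hasEigenvector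
  choose v hv using hev
  have hli := Module.End.eigenvectors_linearIndependent' _ e he v hv
  have hu : IsUnit (Matrix.of v)ᵀ := Matrix.linearIndependent_cols_iff_isUnit.1 hli
  obtain ⟨P, hP⟩ := hu
  refine ⟨P, e, ?_⟩
  rw [Units.eq_mul_inv_iff_mul_eq, hP]
  ext i j
  have := congrFun (hv j).apply_eq_smul i
  rw [Matrix.mul_diagonal]
  simpa [Matrix.mul_apply, Matrix.mulVec, dotProduct, mul_comm] using this

/-- If `W < U` are stable under `g`, then `g` has an eigenvector on `U ⧸ W`. -/
theorem Module.End.exists_sub_smul_mem_of_lt {K V : Type*} [Field K] [IsAlgClosed K]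
    [AddCommGroup V] [Module K V] [FiniteDimensional K V] (g : Module.End K V)
    {W U : Submodule K V} (hWU : W < U) (hW : ∀ x ∈ W, g x ∈ W) (hU : ∀ x ∈ U, g x ∈ U) :
    ∃ v ∈ U, v ∉ W ∧ ∃ μ : K, g v - μ • v ∈ W := by
  let W' : Submodule K U := W.comap U.subtype
  have hne : W' ≠ ⊤ := fun h => hWU.not_ge (Submodule.comap_subtype_eq_top.1 h)
  have : Nontrivial (U ⧸ W') := Submodule.Quotient.nontrivial_iff.2 hne
  let gU : Module.End K U := g.restrict hU
  have hgU : W' ≤ W'.comap gU := fun x hx => hW _ hx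
  obtain ⟨μ, hμ⟩ := Module.End.exists_eigenvalue (W'.mapQ W' gU hgU)
  obtain ⟨q, hq⟩ := hμ.exists_hasEigenvector
  obtain ⟨v, rfl⟩ := W'.mkQ_surjective q
  refine ⟨v, v.2, fun h => hq.2 ((Submodule.Quotient.mk_eq_zero W').2 h), μ, ?_⟩
  have h := hq.apply_eq_smul
  rw [Submodule.mkQ_apply, Submodule.mapQ_apply, ← Submodule.Quotient.mk_smul,
    Submodule.Quotient.eq] at h
  exact h

/-- The orthogonal complement of a subspace stable under an isometry is stable as well. -/
theorem LinearMap.BilinForm.apply_mem_orthogonal_of_isometry {K V : Type*} [Field K]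
    [AddCommGroup V] [Module K V] [FiniteDimensional K V] {B : LinearMap.BilinForm K V}
    {g : Module.End K V} (hinj : Function.Injective g) (hg : ∀ x y, B (g x) (g y) = B x y)
    {W : Submodule K V} (hW : ∀ x ∈ W, g x ∈ W) {x : V} (hx : x ∈ B.orthogonal W) :
    g x ∈ B.orthogonal W := by
  intro w hw
  have hsurj : Function.Surjective (g.restrict hW) :=
    LinearMap.injective_iff_surjective.1 fun a b hab =>
      Subtype.ext (hinj (congrArg Subtype.val hab))
  obtain ⟨w', hw'⟩ := hsurj ⟨w, hw⟩
  have : g w' = w := congrArg Subtype.val hw'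
  rw [← this]
  exact (hg _ _).trans (hx _ w'.2)

/-- An isometry of a nondegenerate alternating form stabilizes a flag of isotropic subspaces
of every length up to half of the dimension. -/
theorem LinearMap.BilinForm.exists_isotropic_flag {K V : Type*} [Field K] [IsAlgClosed K]
    [AddCommGroup V] [Module K V] [FiniteDimensional K V] {B : LinearMap.BilinForm K V}
    (hB : B.Nondegenerate) (halt : B.IsAlt) {g : Module.End K V} (hinj : Function.Injective g)
    (hg : ∀ x y, B (g x) (g y) = B x y) (k : ℕ) (hk : 2 * k ≤ Module.finrank K V) :
    ∃ v : Fin k → V, LinearIndependent K v ∧ (∀ i j, B (v i) (v j) = 0) ∧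
      ∀ j, g (v j) ∈ Submodule.span K (v '' Set.Iic j) := by
  induction k with
  | zero => exact ⟨Fin.elim0, linearIndependent_empty_type, fun i => i.elim0, fun i => i.elim0⟩
  | succ k ih =>
    obtain ⟨v, hli, hiso, hflag⟩ := ih (by omega)
    set W := Submodule.span K (Set.range v) with hWdef
    have hgW : ∀ x ∈ W, g x ∈ W := by
      suffices W ≤ W.comap g from this
      rw [hWdef, Submodule.span_le]
      rintro _ ⟨j, rfl⟩
      exact Submodule.span_mono (Set.image_subset_range _ _) (hflag j)
    have hWorth : ∀ x, x ∈ B.orthogonal W ↔ ∀ i, B (v i) x = 0 := by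
      intro x
      refine ⟨fun h i => h _ (Submodule.subset_span ⟨i, rfl⟩), fun h => ?_⟩
      suffices W ≤ LinearMap.ker (B.flip x) from fun w hw => this hw
      rw [hWdef, Submodule.span_le]
      rintro _ ⟨j, rfl⟩
      exact h j
    have hWle : W ≤ B.orthogonal W := by
      rw [hWdef, Submodule.span_le]
      rintro _ ⟨j, rfl⟩
      exact (hWorth _).2 fun i => hiso i j
    have hlt : W < B.orthogonal W := by
      refine lt_of_le_of_ne hWle fun h => ?_
      have h1 := LinearMap.BilinForm.finrank_orthogonal hB W
      have h2 : Module.finrank K W = k := by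
        simpa using finrank_span_eq_card hli
      rw [← h] at h1
      omega
    obtain ⟨x, hxU, hxW, μ, hx⟩ := g.exists_sub_smul_mem_of_lt hlt hgW
      fun _ => LinearMap.BilinForm.apply_mem_orthogonal_of_isometry hinj hg hgW
    have hvx := (hWorth x).1 hxU
    refine ⟨Fin.snoc v x, linearIndependent_finSnoc.2 ⟨hli, hxW⟩, ?_, ?_⟩
    · intro i j
      induction i using Fin.lastCases with
      | last =>
        induction j using Fin.lastCases with
        | last => simpa using halt x
        | cast j => simpa using halt.isRefl _ _ (hvx j)
      | cast i =>
        induction j using Fin.lastCases with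
        | last => simpa using hvx i
        | cast j => simpa using hiso i j
    · intro j
      induction j using Fin.lastCases with
      | last =>
        have hx' : x ∈ Submodule.span K
            ((Fin.snoc v x : Fin (k + 1) → V) '' Set.Iic (Fin.last k)) :=
          Submodule.subset_span ⟨Fin.last k, by simp, by simp⟩
        have hle : W ≤ Submodule.span K
            ((Fin.snoc v x : Fin (k + 1) → V) '' Set.Iic (Fin.last k)) := by
          refine Submodule.span_mono ?_
          rintro _ ⟨i, rfl⟩
          exact ⟨i.castSucc, Fin.le_last _, by simp⟩
        rw [Fin.snoc_last, ← sub_add_cancel (g x) (μ • x)]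
        exact add_mem (hle hx) (Submodule.smul_mem _ _ hx')
      | cast j =>
        rw [Fin.snoc_castSucc]
        refine Submodule.span_mono ?_ (hflag j)
        rintro _ ⟨i, hi, rfl⟩
        exact ⟨i.castSucc, by simpa using hi, by simp⟩

/-- The columns of a basis of an isotropic subspace of dimension `n` are the first `n` columns of a
symplectic matrix. -/
theorem SymplecticGroup.exists_fromCols_mem {l K : Type*} [Fintype l] [DecidableEq l] [Field K]
    [CharZero K] {Q : Matrix (l ⊕ l) l K} (hli : LinearIndependent K Q.col)
    (hQ : Qᵀ * J l K * Q = 0) :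
    ∃ Z : Matrix (l ⊕ l) l K, Matrix.fromCols Q Z ∈ Matrix.symplecticGroup l K := by
  obtain ⟨R, hR⟩ : ∃ R : Matrix l (l ⊕ l) K, R * Q = 1 := by
    obtain ⟨f, hf⟩ := LinearMap.exists_leftInverse_of_injective Q.mulVecLin
      (LinearMap.ker_eq_bot.2 (Matrix.mulVec_injective_iff.2 hli))
    refine ⟨LinearMap.toMatrix' f, ?_⟩
    have := congrArg LinearMap.toMatrix' hf
    rwa [LinearMap.toMatrix'_comp, LinearMap.toMatrix'_id, ← Matrix.toLin'_apply',
      LinearMap.toMatrix'_toLin'] at this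
  have hJT : (J l K)ᵀ = -J l K := J_transpose l K
  obtain ⟨Z, hZ⟩ : ∃ Z : Matrix (l ⊕ l) l K, Qᵀ * J l K * Z = -1 := by
    refine ⟨J l K * Rᵀ, ?_⟩
    rw [Matrix.mul_assoc, ← Matrix.mul_assoc (J l K), J_squared, Matrix.neg_mul, Matrix.one_mul,
      Matrix.mul_neg, ← Matrix.transpose_mul, hR, Matrix.transpose_one]
  have hZ' : Zᵀ * J l K * Q = 1 := by
    have := congrArg Matrix.transpose hZ
    simpa [Matrix.transpose_mul, Matrix.mul_assoc] using this
  set S := Zᵀ * J l K * Z with hS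
  have hST : Sᵀ = -S := by
    simp [hS, Matrix.transpose_mul, Matrix.mul_assoc]
  set C : Matrix l l K := -((2 : K)⁻¹ • S) with hC
  have hCT : Cᵀ = -C := by simp [hC, hST]
  have hCS : C + C = -S := by
    rw [hC, ← neg_add, ← add_smul]
    norm_num
  refine ⟨Z + Q * C, SymplecticGroup.mem_iff'.2 ?_⟩
  have h12 : Qᵀ * J l K * (Z + Q * C) = -1 := by
    rw [Matrix.mul_add, hZ, ← Matrix.mul_assoc, hQ, Matrix.zero_mul, add_zero]
  have h21 : (Z + Q * C)ᵀ * J l K * Q = 1 := by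
    have := congrArg Matrix.transpose h12
    simpa [Matrix.transpose_mul, Matrix.mul_assoc] using this
  have h22 : (Z + Q * C)ᵀ * J l K * (Z + Q * C) = 0 := by
    rw [Matrix.mul_add, ← Matrix.mul_assoc, h21, Matrix.one_mul, Matrix.transpose_add,
      Matrix.transpose_mul, Matrix.add_mul, Matrix.add_mul, ← hS, Matrix.mul_assoc Cᵀ,
      Matrix.mul_assoc Cᵀ, hZ, hCT]
    simp [add_assoc, hCS]
  rw [Matrix.transpose_fromCols, Matrix.fromRows_mul, Matrix.fromRows_mul_fromCols, hQ, h12, h21,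
    h22]
  rfl

theorem stdSymplecticJ_eq_neg_J (n : ℕ) (K : Type*) [Field K] :
    stdSymplecticJ n K = -J (Fin n) K := by
  simp [stdSymplecticJ, J, Matrix.fromBlocks_neg]

theorem transpose_mul_stdSymplecticJ_mul_eq_iff {n : ℕ} {K : Type*} [Field K]
    {M : Matrix (Fin n ⊕ Fin n) (Fin n ⊕ Fin n) K} :
    Mᵀ * stdSymplecticJ n K * M = stdSymplecticJ n K ↔ M ∈ Matrix.symplecticGroup (Fin n) K := by
  simp [SymplecticGroup.mem_iff', stdSymplecticJ_eq_neg_J]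

theorem SymplecticGroup.inv_mem {l K : Type*} [Fintype l] [DecidableEq l] [Field K]
    {M : Matrix (l ⊕ l) (l ⊕ l) K} (hM : M ∈ Matrix.symplecticGroup l K) :
    M⁻¹ ∈ Matrix.symplecticGroup l K := by
  have := (⟨M, hM⟩ : Matrix.symplecticGroup l K)⁻¹.2
  rwa [SymplecticGroup.coe_inv'] at this

theorem Matrix.IsDiagonalizableSq.conj {m K : Type*} [Fintype m] [DecidableEq m] [Field K]
    {M : Matrix m m K} (hM : M.IsDiagonalizableSq) (P : (Matrix m m K)ˣ) :
    (P * M * (P⁻¹ : (Matrix m m K)ˣ) : Matrix m m K).IsDiagonalizableSq := by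
  obtain ⟨R, d, rfl⟩ := hM
  exact ⟨P * R, d, by simp [Matrix.mul_assoc]⟩

theorem Matrix.isDiagonalizableSq_diagonal {m K : Type*} [Fintype m] [DecidableEq m] [Field K]
    (d : m → K) : (Matrix.diagonal d).IsDiagonalizableSq :=
  ⟨1, d, by simp⟩

/-- Every symplectic matrix is conjugate under the symplectic group to a block upper triangular one
whose first diagonal block is upper triangular. -/
theorem SymplecticGroup.exists_conj_fromBlocks_isUpperTriangular {K : Type*} [Field K]
    [IsAlgClosed K] [CharZero K] {n : ℕ} {M : Matrix (Fin n ⊕ Fin n) (Fin n ⊕ Fin n) K}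
    (hM : M ∈ Matrix.symplecticGroup (Fin n) K) :
    ∃ P ∈ Matrix.symplecticGroup (Fin n) K, ∃ A B D : Matrix (Fin n) (Fin n) K,
      A.IsUpperTriangular ∧ P⁻¹ * M * P = Matrix.fromBlocks A B 0 D := by
  have hBapp : ∀ x y, Matrix.toBilin' (J (Fin n) K) x y = x ⬝ᵥ J (Fin n) K *ᵥ y :=
    Matrix.toBilin'_apply' _
  have hB : (Matrix.toBilin' (J (Fin n) K)).Nondegenerate :=
    (Matrix.nondegenerate_of_det_ne_zero (isUnit_det_J _ _).ne_zero).toBilin'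
  have halt : (Matrix.toBilin' (J (Fin n) K)).IsAlt := by
    intro x
    have h : x ⬝ᵥ J (Fin n) K *ᵥ x = -(x ⬝ᵥ J (Fin n) K *ᵥ x) := by
      conv_lhs => rw [Matrix.dotProduct_mulVec, ← Matrix.mulVec_transpose, J_transpose,
        dotProduct_comm, Matrix.neg_mulVec, dotProduct_neg]
    rw [hBapp]
    exact self_eq_neg.1 h
  have hg : ∀ x y, Matrix.toBilin' (J (Fin n) K) (M.mulVecLin x) (M.mulVecLin y) =
      Matrix.toBilin' (J (Fin n) K) x y := by
    intro x y
    rw [hBapp, hBapp, Matrix.mulVecLin_apply, Matrix.mulVecLin_apply, ← Matrix.vecMul_transpose,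
      ← Matrix.dotProduct_mulVec, Matrix.mulVec_mulVec, Matrix.mulVec_mulVec,
      SymplecticGroup.mem_iff'.1 hM]
  have hinj : Function.Injective M.mulVecLin :=
    Matrix.mulVec_injective_of_det_ne_zero (SymplecticGroup.symplectic_det hM).ne_zero
  obtain ⟨v, hli, hiso, hflag⟩ := LinearMap.BilinForm.exists_isotropic_flag hB halt hinj hg n
    (by simp [two_mul])
  obtain ⟨Z, hZ⟩ := SymplecticGroup.exists_fromCols_mem (Q := (Matrix.of v)ᵀ) hli (by
    ext i j
    have := hiso i j
    rw [hBapp, Matrix.dotProduct_mulVec] at this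
    simpa [Matrix.mul_apply, Matrix.vecMul, dotProduct] using this)
  set P := Matrix.fromCols (Matrix.of v)ᵀ Z with hP
  have hdet := SymplecticGroup.symplectic_det hZ
  have hPv : ∀ j, P *ᵥ Pi.single (Sum.inl j) 1 = v j := by
    intro j
    ext r
    simp [hP]
  have hPinv : ∀ j, P⁻¹ *ᵥ v j = Pi.single (Sum.inl j) 1 := by
    intro j
    rw [← hPv, Matrix.mulVec_mulVec, Matrix.nonsing_inv_mul _ hdet, Matrix.one_mulVec]
  have hzero : ∀ j r, (∀ i ≤ j, r ≠ Sum.inl i) → (P⁻¹ * M * P) r (Sum.inl j) = 0 := by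
    intro j r hr
    have hle : Submodule.span K (v '' Set.Iic j) ≤
        LinearMap.ker (LinearMap.proj r ∘ₗ P⁻¹.mulVecLin) := by
      rw [Submodule.span_le]
      rintro _ ⟨i, hi, rfl⟩
      simp [hPinv, hr i hi]
    have h : (P⁻¹ *ᵥ (M *ᵥ v j)) r = 0 := hle (hflag j)
    rwa [← hPv, Matrix.mulVec_mulVec, Matrix.mulVec_mulVec, Matrix.mulVec_single_one] at h
  refine ⟨P, hZ, (P⁻¹ * M * P).toBlocks₁₁, (P⁻¹ * M * P).toBlocks₁₂, (P⁻¹ * M * P).toBlocks₂₂,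
    ?_, ?_⟩
  · intro i j hij
    exact hzero j _ fun k hk h => (hk.trans_lt hij).ne (Sum.inl_injective h).symm
  · have h21 : (P⁻¹ * M * P).toBlocks₂₁ = 0 := by
      ext i j
      exact hzero j _ fun k _ => Sum.inr_ne_inl
    rw [← h21, Matrix.fromBlocks_toBlocks]

theorem Matrix.IsUpperTriangular.mul_apply_self {m R : Type*} [Fintype m] [LinearOrder m]
    [NonUnitalNonAssocSemiring R] {A B : Matrix m m R} (hA : A.IsUpperTriangular)
    (hB : B.IsUpperTriangular) (i : m) : (A * B) i i = A i i * B i i := by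
  rw [Matrix.mul_apply, Finset.sum_eq_single i _ (by simp)]
  intro j _ hj
  rcases lt_or_gt_of_ne hj with h | h
  · rw [hA h, zero_mul]
  · rw [hB h, mul_zero]

theorem injective_sumElim_two_pow_inv (K : Type*) [Field K] [CharZero K] (n : ℕ) :
    Function.Injective (Sum.elim (fun i : Fin n => (2 : K) ^ (i.val + 1))
      fun i : Fin n => ((2 : K) ^ (i.val + 1))⁻¹) := by
  have hpow : ∀ {a b : ℕ}, (2 : K) ^ a = 2 ^ b → a = b := fun {a b} h =>
    Nat.pow_right_injective le_rfl (by exact_mod_cast h)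
  have hmul : ∀ i j : Fin n, (2 : K) ^ (i.val + 1) ≠ (2 ^ (j.val + 1))⁻¹ := by
    intro i j h
    rw [← mul_eq_one_iff_eq_inv₀ (pow_ne_zero _ two_ne_zero), ← pow_add] at h
    have := hpow (h.trans (pow_zero 2).symm)
    omega
  rintro (i | i) (j | j) h <;> simp only [Sum.elim_inl, Sum.elim_inr] at h
  · have := hpow h
    exact congrArg _ (Fin.ext (by omega))
  · exact (hmul i j h).elim
  · exact (hmul j i h.symm).elim
  · have := hpow (inv_injective h)
    exact congrArg _ (Fin.ext (by omega))

/-- A symplectic matrix in block upper triangular form, with first diagonal block upper triangular,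
is a product of a diagonalizable symplectic matrix and a diagonal symplectic matrix. -/
theorem SymplecticGroup.exists_mul_of_fromBlocks_isUpperTriangular {K : Type*} [Field K]
    [CharZero K] {n : ℕ} {A B D : Matrix (Fin n) (Fin n) K} (hA : A.IsUpperTriangular)
    (hM : Matrix.fromBlocks A B 0 D ∈ Matrix.symplecticGroup (Fin n) K) :
    ∃ S₁ ∈ Matrix.symplecticGroup (Fin n) K, ∃ S₂ ∈ Matrix.symplecticGroup (Fin n) K,
      S₁.IsDiagonalizableSq ∧ S₂.IsDiagonalizableSq ∧ Matrix.fromBlocks A B 0 D = S₁ * S₂ := by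
  have hAD : Aᵀ * D = 1 := by simpa using (SymplecticGroup.fromBlocks_mem_iff.1 hM).2.2
  have hDA : Dᵀ * A = 1 := by simpa using congrArg Matrix.transpose hAD
  have hDT : Dᵀ.IsUpperTriangular := by
    have : Invertible A := invertibleOfLeftInverse _ _ hDA
    rw [← Matrix.inv_eq_left_inv hDA]
    exact Matrix.blockTriangular_inv_of_blockTriangular hA
  have hdiag : ∀ i, D i i * A i i = 1 := by
    intro i
    have := hDT.mul_apply_self hA i
    rw [hDA] at this
    simpa using this.symm
  have hA0 : ∀ i, A i i ≠ 0 := fun i => right_ne_zero_of_mul_eq_one (hdiag i)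
  set e : Fin n → K := fun i => 2 ^ (i.val + 1) with he
  have he0 : ∀ i, e i ≠ 0 := fun i => pow_ne_zero _ two_ne_zero
  set t : Fin n → K := fun i => A i i / e i with ht
  have ht0 : ∀ i, t i ≠ 0 := fun i => div_ne_zero (hA0 i) (he0 i)
  have hsymp : ∀ u : Fin n → K, (∀ i, u i ≠ 0) →
      Matrix.fromBlocks (Matrix.diagonal u) 0 0 (Matrix.diagonal fun i => (u i)⁻¹) ∈
        Matrix.symplecticGroup (Fin n) K := by
    intro u hu
    rw [SymplecticGroup.fromBlocks_mem_iff]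
    simp [hu]
  refine ⟨Matrix.fromBlocks A B 0 D * Matrix.fromBlocks (Matrix.diagonal fun i => (t i)⁻¹) 0 0
    (Matrix.diagonal t), mul_mem hM (by simpa using hsymp (fun i => (t i)⁻¹) (by simpa using ht0)),
    _, hsymp t ht0, ?_, ?_, ?_⟩
  · refine Matrix.isDiagonalizableSq_of_isRoot_charpoly (injective_sumElim_two_pow_inv K n) ?_
    have h1 : (A * Matrix.diagonal fun i => (t i)⁻¹).charpoly =
        ∏ i, (Polynomial.X - Polynomial.C (e i)) := by
      rw [Matrix.charpoly_of_isUpperTriangular _ (hA.mul (Matrix.blockTriangular_diagonal _))]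
      refine Finset.prod_congr rfl fun i _ => ?_
      rw [Matrix.mul_diagonal, inv_div, mul_div_cancel₀ _ (hA0 i)]
    have h2 : (D * Matrix.diagonal t).charpoly =
        ∏ i, (Polynomial.X - Polynomial.C (e i)⁻¹) := by
      rw [← Matrix.charpoly_transpose, Matrix.transpose_mul, Matrix.diagonal_transpose,
        Matrix.charpoly_of_isUpperTriangular _ ((Matrix.blockTriangular_diagonal _).mul hDT)]
      refine Finset.prod_congr rfl fun i _ => ?_
      rw [Matrix.diagonal_mul, Matrix.transpose_apply, ht]
      simp only
      rw [div_mul_eq_mul_div, mul_comm, hdiag, one_div]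
    rw [Matrix.fromBlocks_multiply]
    simp only [Matrix.mul_zero, Matrix.zero_mul, add_zero, zero_add]
    rw [Matrix.charpoly_fromBlocks_zero₂₁, h1, h2]
    simp only [Polynomial.IsRoot.def, Polynomial.eval_mul, Polynomial.eval_prod]
    rintro (i | i)
    · exact mul_eq_zero_of_left (Finset.prod_eq_zero (Finset.mem_univ i) (by simp [he])) _
    · exact mul_eq_zero_of_right _ (Finset.prod_eq_zero (Finset.mem_univ i) (by simp [he]))
  · rw [Matrix.fromBlocks_diagonal]
    exact Matrix.isDiagonalizableSq_diagonal _
  · rw [Matrix.mul_assoc, Matrix.fromBlocks_multiply]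
    simp [ht0]

/-- Every element of the symplectic group `Sp_{2n}(K)` over an algebraically closed field of
characteristic zero is a product of two diagonalizable symplectic matrices. -/
theorem stmt2 (K : Type*) [Field K] [IsAlgClosed K] [CharZero K] (n : ℕ) (hn : 0 < n)
    (M : Matrix (Fin n ⊕ Fin n) (Fin n ⊕ Fin n) K)
    (hM : Mᵀ * stdSymplecticJ n K * M = stdSymplecticJ n K) :
    ∃ S₁ S₂ : Matrix (Fin n ⊕ Fin n) (Fin n ⊕ Fin n) K,
      S₁ᵀ * stdSymplecticJ n K * S₁ = stdSymplecticJ n K ∧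
      S₂ᵀ * stdSymplecticJ n K * S₂ = stdSymplecticJ n K ∧
      Matrix.IsDiagonalizableSq S₁ ∧ Matrix.IsDiagonalizableSq S₂ ∧
      M = S₁ * S₂ := by
  simp only [transpose_mul_stdSymplecticJ_mul_eq_iff] at hM ⊢
  obtain ⟨P, hP, A, B, D, hA, hPM⟩ :=
    SymplecticGroup.exists_conj_fromBlocks_isUpperTriangular hM
  have hPinv := SymplecticGroup.inv_mem hP
  obtain ⟨S₁, hS₁, S₂, hS₂, hd₁, hd₂, hS⟩ :=
    SymplecticGroup.exists_mul_of_fromBlocks_isUpperTriangular hA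
      (hPM ▸ mul_mem (mul_mem hPinv hM) hP)
  have hdet := SymplecticGroup.symplectic_det hP
  refine ⟨P * S₁ * P⁻¹, P * S₂ * P⁻¹, mul_mem (mul_mem hP hS₁) hPinv,
    mul_mem (mul_mem hP hS₂) hPinv, ?_, ?_, ?_⟩
  · exact hd₁.conj (P.nonsingInvUnit hdet)
  · exact hd₂.conj (P.nonsingInvUnit hdet)
  · calc M = P * (P⁻¹ * M * P) * P⁻¹ := by
          simp only [Matrix.mul_assoc, Matrix.mul_nonsing_inv _ hdet, Matrix.mul_one]
          rw [← Matrix.mul_assoc, Matrix.mul_nonsing_inv _ hdet, Matrix.one_mul]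
      _ = P * S₁ * P⁻¹ * (P * S₂ * P⁻¹) := by
          rw [hPM, hS]
          simp only [Matrix.mul_assoc, Matrix.nonsing_inv_mul_cancel_left _ _ hdet]
end

section
/- Let K be an algebraically closed field of characteristic zero and let n be a positive integer. Let B be the group of invertible upper-triangular n×n matrices over K (invertible matrices M with M i j = 0 whenever i > j). Then B is generated by its diagonalizable elements: the subgroup of B generated by the set of elements of B that are conjugate (in GL_n(K)) to a diagonal matrix is all of B. -/
/-- An element of `GL n K` is diagonalizable (semisimple) if its underlying matrix is
conjugate to a diagonal matrix. -/
def GLIsDiagonalizable {n : ℕ} {K : Type*} [Field K] (M : GL (Fin n) K) : Prop :=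
  ∃ P : GL (Fin n) K, ∃ d : Fin n → K,
    (M : Matrix (Fin n) (Fin n) K) =
      (P : Matrix (Fin n) (Fin n) K) * Matrix.diagonal d *
        ((P⁻¹ : GL (Fin n) K) : Matrix (Fin n) (Fin n) K)

/-- An element of `GL n K` is upper triangular if all entries below the diagonal of its
underlying matrix vanish. -/
def GLIsUpperTriangular {n : ℕ} {K : Type*} [Field K] (M : GL (Fin n) K) : Prop :=
  ∀ i j : Fin n, j < i → (M : Matrix (Fin n) (Fin n) K) i j = 0

/-- Upper triangularity is block triangularity with respect to the identity indexing. -/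
theorem glIsUpperTriangular_iff_blockTriangular {n : ℕ} {K : Type*} [Field K]
    {M : GL (Fin n) K} :
    GLIsUpperTriangular M ↔ (M : Matrix (Fin n) (Fin n) K).BlockTriangular id :=
  Iff.rfl

/-- The subgroup of upper-triangular elements of `GL n K`. -/
def upperTriangularSubgroup (n : ℕ) (K : Type*) [Field K] : Subgroup (GL (Fin n) K) where
  carrier := {M | GLIsUpperTriangular M}
  one_mem' := Matrix.blockTriangular_one (b := id)
  mul_mem' {M N} hM hN := by
    have h := Matrix.BlockTriangular.mul (glIsUpperTriangular_iff_blockTriangular.1 hM)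
      (glIsUpperTriangular_iff_blockTriangular.1 hN)
    exact h
  inv_mem' {M} hM := by
    have h := Matrix.blockTriangular_inv_of_blockTriangular
      (glIsUpperTriangular_iff_blockTriangular.1 hM)
    rw [← Matrix.coe_units_inv] at h
    exact h

/-- A matrix whose eigenvalues include an injective family indexed by `Fin n` is
diagonalizable. -/
theorem glIsDiagonalizable_of_injective_eigenvalues {n : ℕ} {K : Type*} [Field K]
    (M : GL (Fin n) K) (d : Fin n → K) (hd : Function.Injective d)
    (h : ∀ i, (M : Matrix (Fin n) (Fin n) K).charpoly.IsRoot (d i)) :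
    GLIsDiagonalizable M := by
  have hev : ∀ i, Module.End.HasEigenvalue (Matrix.toLin' (M : Matrix (Fin n) (Fin n) K)) (d i) :=
    fun i => by
      rw [Module.End.hasEigenvalue_iff_isRoot_charpoly, Matrix.charpoly_toLin']
      exact h i
  choose v hv using fun i => (hev i).exists_hasEigenvector
  have hli := Module.End.eigenvectors_linearIndependent' _ d hd v hv
  have hunit : IsUnit (Matrix.of v).transpose := by
    rw [← Matrix.linearIndependent_cols_iff_isUnit]
    exact hli
  obtain ⟨P, hP⟩ := hunit
  refine ⟨P, d, ?_⟩
  have hMP : (M : Matrix (Fin n) (Fin n) K) * P = P * Matrix.diagonal d := by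
    ext i j
    have hij := congrFun (hv j).apply_eq_smul i
    rw [Matrix.mul_diagonal, hP]
    simpa [Matrix.mul_apply, Matrix.mulVec, dotProduct, mul_comm] using hij
  rw [← hMP, mul_assoc, Units.mul_inv, mul_one]

/-- An upper-triangular matrix with distinct diagonal entries is diagonalizable. -/
theorem GLIsUpperTriangular.glIsDiagonalizable_of_injective {n : ℕ} {K : Type*} [Field K]
    {M : GL (Fin n) K} (hM : GLIsUpperTriangular M)
    (hd : Function.Injective fun i => (M : Matrix (Fin n) (Fin n) K) i i) :
    GLIsDiagonalizable M := by
  refine glIsDiagonalizable_of_injective_eigenvalues M _ hd fun i => ?_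
  rw [Matrix.charpoly_of_isUpperTriangular _ hM, Polynomial.IsRoot.def, Polynomial.eval_prod]
  exact Finset.prod_eq_zero (Finset.mem_univ i) (by simp)

/-- The diagonal entries of an invertible upper-triangular matrix are nonzero. -/
theorem GLIsUpperTriangular.diag_ne_zero {n : ℕ} {K : Type*} [Field K]
    {M : GL (Fin n) K} (hM : GLIsUpperTriangular M) (i : Fin n) :
    (M : Matrix (Fin n) (Fin n) K) i i ≠ 0 := by
  have hdet : (M : Matrix (Fin n) (Fin n) K).det ≠ 0 :=
    ((Matrix.isUnit_iff_isUnit_det _).1 M.isUnit).ne_zero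
  rw [Matrix.det_of_isUpperTriangular hM] at hdet
  exact Finset.prod_ne_zero_iff.1 hdet i (Finset.mem_univ i)

/-- The Borel subgroup `B` of invertible upper-triangular matrices over an algebraically
closed field of characteristic zero is generated by its diagonalizable elements: an element
of `GL n K` lies in the subgroup generated by the diagonalizable upper-triangular matrices
if and only if it is upper triangular. -/
theorem stmt7 (K : Type*) [Field K] [IsAlgClosed K] [CharZero K] (n : ℕ) (hn : 0 < n)
    (M : GL (Fin n) K) :
    M ∈ Subgroup.closure {S : GL (Fin n) K | GLIsUpperTriangular S ∧ GLIsDiagonalizable S} ↔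
      GLIsUpperTriangular M := by
  refine ⟨fun h => (Subgroup.closure_le (upperTriangularSubgroup n K)).2 (fun S hS => hS.1) h,
    fun hM => ?_⟩
  let c : Fin n → K := fun i => ((i : ℕ) + 1) / (M : Matrix (Fin n) (Fin n) K) i i
  have hc : ∀ i, c i ≠ 0 := fun i =>
    div_ne_zero (Nat.cast_add_one_ne_zero _) (hM.diag_ne_zero i)
  have hunit : IsUnit (Matrix.diagonal c) := by
    rw [Matrix.isUnit_iff_isUnit_det, Matrix.det_diagonal]
    exact (Finset.prod_ne_zero_iff.2 fun i _ => hc i).isUnit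
  obtain ⟨D, hD⟩ := hunit
  have hDtri : GLIsUpperTriangular D := by
    rw [glIsUpperTriangular_iff_blockTriangular, hD]
    exact Matrix.blockTriangular_diagonal c
  have hDdiag : GLIsDiagonalizable D := ⟨1, c, by simp [hD]⟩
  have hDM : GLIsUpperTriangular (D * M) := (upperTriangularSubgroup n K).mul_mem hDtri hM
  have hentry : ∀ i, ((D * M : GL (Fin n) K) : Matrix (Fin n) (Fin n) K) i i = (i : ℕ) + 1 :=
    fun i => by
      rw [Units.val_mul, hD, Matrix.diagonal_mul]
      exact div_mul_cancel₀ _ (hM.diag_ne_zero i)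
  have hDMdiag : GLIsDiagonalizable (D * M) := by
    refine hDM.glIsDiagonalizable_of_injective fun i j hij => ?_
    simpa [hentry, Fin.val_inj] using hij
  have hDmem : D ∈ Subgroup.closure
      {S : GL (Fin n) K | GLIsUpperTriangular S ∧ GLIsDiagonalizable S} :=
    Subgroup.subset_closure ⟨hDtri, hDdiag⟩
  rw [← Subgroup.mul_mem_cancel_left _ hDmem]
  exact Subgroup.subset_closure ⟨hDM, hDMdiag⟩
end

section
/- Let K be an algebraically closed field of characteristic zero and let M = [[1, a, d, b], [0, t, 0, c], [0, 0, 1, e], [0, 0, 0, 1]] be a matrix with t ∈ K∖{0} and a, b, c, d, e ∈ K. If M is diagonalizable (conjugate in GL₄(K) to a diagonal matrix), then d = 0 and e = 0. -/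
/-- If `A` is conjugate to a diagonal matrix over a field, then `A - 1` has a commuting
generalized inverse. -/
theorem Matrix.exists_mul_sq_sub_one_of_conj_diagonal {n K : Type*} [Fintype n]
    [DecidableEq n] [Field K] (P : (Matrix n n K)ˣ) (v : n → K) {A : Matrix n n K}
    (hA : A = (P : Matrix n n K) * Matrix.diagonal v *
      ((P⁻¹ : (Matrix n n K)ˣ) : Matrix n n K)) :
    ∃ Q : Matrix n n K,
      Q * ((A - 1) * (A - 1)) = A - 1 ∧ (A - 1) * (A - 1) * Q = A - 1 := by
  have hconj : A - 1 = (P : Matrix n n K) * Matrix.diagonal (v - 1) * (P⁻¹).val := by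
    have hsub : Matrix.diagonal (v - 1) = Matrix.diagonal v - 1 := by
      rw [← Matrix.diagonal_one, Matrix.diagonal_sub]
      rfl
    rw [hsub, hA]
    simp [mul_sub, sub_mul]
  have hmul (x y : n → K) : (P : Matrix n n K) * Matrix.diagonal x * (P⁻¹).val *
      (P.val * Matrix.diagonal y * (P⁻¹).val) = P.val * Matrix.diagonal (x * y) * (P⁻¹).val := by
    have hdiag : Matrix.diagonal (x * y) = Matrix.diagonal x * Matrix.diagonal y :=
      (Matrix.diagonal_mul_diagonal x y).symm
    rw [hdiag]
    simp only [mul_assoc, Units.inv_mul_cancel_left]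
  have hinv (x : n → K) : x⁻¹ * (x * x) = x := by
    funext i
    by_cases h : x i = 0 <;> simp [h]
  refine ⟨P.val * Matrix.diagonal (v - 1)⁻¹ * (P⁻¹).val, ?_, ?_⟩
  · rw [hconj, hmul, hmul, hinv]
  · rw [hconj, hmul, hmul, mul_comm _ (v - 1)⁻¹, hinv]

/-- If a matrix `[[1, a, d, b], [0, t, 0, c], [0, 0, 1, e], [0, 0, 0, 1]]` with `t ≠ 0`
over an algebraically closed field of characteristic zero is diagonalizable (conjugate in
`GL₄(K)` to a diagonal matrix), then `d = 0` and `e = 0`. -/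
theorem stmt9 (K : Type*) [Field K] [IsAlgClosed K] [CharZero K]
    (t a b c d e : K) (ht : t ≠ 0)
    (hdiag : ∃ P : (Matrix (Fin 4) (Fin 4) K)ˣ, ∃ dv : Fin 4 → K,
      !![1, a, d, b; 0, t, 0, c; 0, 0, 1, e; 0, 0, 0, 1] =
        (P : Matrix (Fin 4) (Fin 4) K) * Matrix.diagonal dv *
          ((P⁻¹ : (Matrix (Fin 4) (Fin 4) K)ˣ) : Matrix (Fin 4) (Fin 4) K)) :
    d = 0 ∧ e = 0 := by
  obtain ⟨P, v, h⟩ := hdiag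
  obtain ⟨Q, hl, hr⟩ := Matrix.exists_mul_sq_sub_one_of_conj_diagonal P v h
  have hd := congrFun (congrFun hl 0) 2
  have he := congrFun (congrFun hr 2) 3
  simp [Matrix.mul_apply, Fin.sum_univ_four, Matrix.one_apply] at hd he
  exact ⟨hd.symm, he.symm⟩
end

section
/- Let K be a field of characteristic zero, let g be a finite-dimensional Lie algebra over K, let r be a Lie subalgebra of g and let i be a Lie ideal of g containing r. Suppose V is an r-submodule of g under the adjoint action (a subspace with ⁅x, v⁆ ∈ V for all x ∈ r, v ∈ V) such that V is irreducible as an r-module and the action of r on V is nontrivial (⁅x, v⁆ ≠ 0 for some x ∈ r, v ∈ V). Then V ⊆ i. -/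
/-- Any Lie ideal containing `r` contains every irreducible `r`-submodule (under the adjoint
action) on which `r` acts nontrivially. -/
theorem stmt12 (K : Type*) [Field K] [CharZero K]
    (g : Type*) [LieRing g] [LieAlgebra K g] [Module.Finite K g]
    (r : LieSubalgebra K g) (i : LieIdeal K g)
    (hri : ∀ x ∈ r, x ∈ i)
    (V : Submodule K g)
    (hmod : ∀ x ∈ r, ∀ v ∈ V, ⁅x, v⁆ ∈ V)
    (hne : V ≠ ⊥)
    (hirr : ∀ W : Submodule K g, W ≤ V → (∀ x ∈ r, ∀ w ∈ W, ⁅x, w⁆ ∈ W) → W = ⊥ ∨ W = V)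
    (hnontriv : ∃ x ∈ r, ∃ v ∈ V, ⁅x, v⁆ ≠ 0) :
    ∀ v ∈ V, v ∈ i := by
  obtain ⟨x, hx, v, hv, hxv⟩ := hnontriv
  have bracket_mem : ∀ y ∈ r, ∀ w ∈ V, ⁅y, w⁆ ∈ V ⊓ i.toSubmodule := fun y hy w hw =>
    ⟨hmod y hy w hw, lie_mem_left K g i y w (hri y hy)⟩
  rcases hirr (V ⊓ i.toSubmodule) inf_le_left (fun y hy w hw => bracket_mem y hy w hw.1) with h | h
  · exact absurd ((Submodule.eq_bot_iff _).mp h _ (bracket_mem x hx v hv)) hxv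
  · exact fun w hw => (inf_eq_left.mp h) hw
end

section
/- Let K be an algebraically closed field of characteristic zero and let g be a finite-dimensional Lie algebra over K. Let r be a Lie subalgebra of g and n a Lie ideal of g such that g = r ⊕ n as vector spaces and such that n, regarded as an r-module via the adjoint action, is a sum of irreducible r-submodules. Let n₁ denote the sum of all irreducible r-submodules of n on which r acts nontrivially, and let s be the Lie subalgebra of n generated by n₁. Then the subspace r ⊕ s is a Lie ideal of g. -/
section Defs

variable (K : Type*) [Field K] (g : Type*) [LieRing g] [LieAlgebra K g]
  (r : LieSubalgebra K g)

/-- A subspace of `g` stable under the adjoint action of the subalgebra `r`. -/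
def IsAdSubmodule (V : Submodule K g) : Prop :=
  ∀ x ∈ r, ∀ v ∈ V, ⁅x, v⁆ ∈ V

/-- An irreducible `r`-submodule of `g` under the adjoint action. -/
def IsIrreducibleAdSubmodule (V : Submodule K g) : Prop :=
  IsAdSubmodule K g r V ∧ V ≠ ⊥ ∧
    ∀ W : Submodule K g, W ≤ V → IsAdSubmodule K g r W → W = ⊥ ∨ W = V

/-- The adjoint action of `r` on `V` is nontrivial. -/
def HasNontrivialAdAction (V : Submodule K g) : Prop :=
  ∃ x ∈ r, ∃ v ∈ V, ⁅x, v⁆ ≠ 0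

/-- `n₁`: the sum of all irreducible `r`-submodules of `n` with nontrivial `r`-action. -/
def adNontrivPart (n : Submodule K g) : Submodule K g :=
  sSup {V : Submodule K g | V ≤ n ∧ IsIrreducibleAdSubmodule K g r V ∧
    HasNontrivialAdAction K g r V}

/-- `s`: the Lie subalgebra generated by `n₁`. -/
def adNontrivSubalgebra (n : Submodule K g) : LieSubalgebra K g :=
  LieSubalgebra.lieSpan K g (adNontrivPart K g r n : Set g)

end Defs

section AdNontrivPart

variable {K : Type*} [Field K] {g : Type*} [LieRing g] [LieAlgebra K g]
  {r : LieSubalgebra K g}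

theorem le_adNontrivPart {n V : Submodule K g} (hVn : V ≤ n)
    (hV : IsIrreducibleAdSubmodule K g r V) (hnt : HasNontrivialAdAction K g r V) :
    V ≤ adNontrivPart K g r n :=
  le_sSup ⟨hVn, hV, hnt⟩

theorem adNontrivPart_le (n : Submodule K g) : adNontrivPart K g r n ≤ n :=
  sSup_le fun _ hV => hV.1

theorem adNontrivPart_le_adNontrivSubalgebra (n : Submodule K g) :
    adNontrivPart K g r n ≤ (adNontrivSubalgebra K g r n).toSubmodule :=
  LieSubalgebra.subset_lieSpan

/-- If `n` is a sum of irreducible `r`-submodules, then `⁅r, n⁆` lies in `n₁`. -/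
theorem lie_mem_adNontrivPart {n : Submodule K g}
    (hn : n = sSup {V : Submodule K g | V ≤ n ∧ IsIrreducibleAdSubmodule K g r V})
    {x v : g} (hx : x ∈ r) (hv : v ∈ n) : ⁅x, v⁆ ∈ adNontrivPart K g r n := by
  have key : n ≤ (adNontrivPart K g r n).comap (LieAlgebra.ad K g x : g →ₗ[K] g) := by
    conv_lhs => rw [hn]
    refine sSup_le fun V hV w hw => ?_
    rw [Submodule.mem_comap, LieAlgebra.ad_apply]
    by_cases h0 : ⁅x, w⁆ = 0
    · rw [h0]
      exact zero_mem _
    · exact le_adNontrivPart hV.1 hV.2 ⟨x, hx, w, hw, h0⟩ (hV.2.1 x hx w hw)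
  exact key hv

/-- An irreducible `r`-submodule with nontrivial action is spanned by `⁅r, V⁆`. -/
theorem IsIrreducibleAdSubmodule.span_lie_eq {V : Submodule K g}
    (hV : IsIrreducibleAdSubmodule K g r V) (hnt : HasNontrivialAdAction K g r V) :
    Submodule.span K {u : g | ∃ x ∈ r, ∃ v ∈ V, ⁅x, v⁆ = u} = V := by
  have hle : Submodule.span K {u : g | ∃ x ∈ r, ∃ v ∈ V, ⁅x, v⁆ = u} ≤ V := by
    rw [Submodule.span_le]
    rintro _ ⟨x, hx, v, hv, rfl⟩
    exact hV.1 x hx v hv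
  refine (hV.2.2 _ hle fun x hx w hw => Submodule.subset_span ⟨x, hx, w, hle hw, rfl⟩).resolve_left
    fun hbot => ?_
  obtain ⟨x, hx, v, hv, h0⟩ := hnt
  refine h0 ((Submodule.mem_bot K).1 ?_)
  rw [← hbot]
  exact Submodule.subset_span ⟨x, hx, v, hv, rfl⟩

/-- An element of `g` that commutes with `r` and stabilizes `n` also stabilizes `n₁`. -/
theorem lie_mem_adNontrivPart_of_commute {n : Submodule K g}
    (hn : n = sSup {V : Submodule K g | V ≤ n ∧ IsIrreducibleAdSubmodule K g r V})
    {z y : g} (hzn : ∀ v ∈ n, ⁅z, v⁆ ∈ n) (hzr : ∀ x ∈ r, ⁅x, z⁆ = 0)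
    (hy : y ∈ adNontrivPart K g r n) : ⁅z, y⁆ ∈ adNontrivPart K g r n := by
  have key : adNontrivPart K g r n ≤
      (adNontrivPart K g r n).comap (LieAlgebra.ad K g z : g →ₗ[K] g) := by
    refine sSup_le fun V hV => ?_
    rw [← hV.2.1.span_lie_eq hV.2.2, Submodule.span_le]
    rintro _ ⟨x, hx, v, hv, rfl⟩
    have hcomm : ⁅z, ⁅x, v⁆⁆ = ⁅x, ⁅z, v⁆⁆ := by
      rw [leibniz_lie x z v, hzr x hx, zero_lie, zero_add]
    rw [SetLike.mem_coe, Submodule.mem_comap, LieAlgebra.ad_apply, hcomm]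
    exact lie_mem_adNontrivPart hn hx (hzn v (hV.1 hv))
  exact key hy

/-- An element stabilizing a set normalizes the Lie subalgebra that the set generates. -/
theorem mem_normalizer_lieSpan {S : Set g} {x : g} (hx : ∀ y ∈ S, ⁅x, y⁆ ∈ S) :
    x ∈ (LieSubalgebra.lieSpan K g S).normalizer := by
  rw [LieSubalgebra.mem_normalizer_iff]
  intro y hy
  induction hy using LieSubalgebra.lieSpan_induction with
  | mem y hy => exact LieSubalgebra.subset_lieSpan (hx y hy)
  | zero => simp
  | add y z _ _ ihy ihz => simpa using add_mem ihy ihz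
  | smul a y _ ih => simpa using SMulMemClass.smul_mem a ih
  | lie y z hy hz ihy ihz =>
    rw [leibniz_lie]
    exact add_mem (LieSubalgebra.lie_mem _ ihy hz) (LieSubalgebra.lie_mem _ hy ihz)

end AdNontrivPart

/-- Lemma 4: if `g = r ⊕ n` with `n` a completely reducible `r`-module under the adjoint
action, then `r ⊕ s` is a Lie ideal of `g`, where `s` is the subalgebra generated by the sum
`n₁` of all nontrivial irreducible `r`-submodules of `n`. -/
theorem stmt13 (K : Type*) [Field K] [IsAlgClosed K] [CharZero K]
    (g : Type*) [LieRing g] [LieAlgebra K g] [Module.Finite K g]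
    (r : LieSubalgebra K g) (n : LieIdeal K g)
    (hsup : r.toSubmodule ⊔ n.toSubmodule = ⊤)
    (hinf : r.toSubmodule ⊓ n.toSubmodule = ⊥)
    (hsemisimple : n.toSubmodule =
      sSup {V : Submodule K g | V ≤ n.toSubmodule ∧ IsIrreducibleAdSubmodule K g r V}) :
    ∀ x : g, ∀ y ∈ r.toSubmodule ⊔ (adNontrivSubalgebra K g r n.toSubmodule).toSubmodule,
      ⁅x, y⁆ ∈ r.toSubmodule ⊔ (adNontrivSubalgebra K g r n.toSubmodule).toSubmodule := by
  set s := adNontrivSubalgebra K g r n.toSubmodule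
  have hr : r.toSubmodule ≤ s.normalizer.toSubmodule := fun x hx =>
    mem_normalizer_lieSpan fun y hy =>
      lie_mem_adNontrivPart hsemisimple hx (adNontrivPart_le _ hy)
  have hn : n.toSubmodule ≤ s.normalizer.toSubmodule := by
    rw [hsemisimple]
    refine sSup_le fun V hV z hz => ?_
    by_cases hnt : HasNontrivialAdAction K g r V
    · exact s.le_normalizer (adNontrivPart_le_adNontrivSubalgebra _
        (le_adNontrivPart hV.1 hV.2 hnt hz))
    · refine mem_normalizer_lieSpan fun y hy => ?_
      refine lie_mem_adNontrivPart_of_commute hsemisimple (fun v hv => n.lie_mem hv)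
        (fun x hx => ?_) hy
      by_contra h0
      exact hnt ⟨x, hx, z, hz, h0⟩
  intro x y hy
  have hxtop : x ∈ r.toSubmodule ⊔ n.toSubmodule := hsup ▸ Submodule.mem_top
  have hxs : x ∈ s.normalizer.toSubmodule := sup_le hr hn hxtop
  obtain ⟨a, ha, b, hb, rfl⟩ := Submodule.mem_sup.1 hy
  obtain ⟨c, hc, d, hd, rfl⟩ := Submodule.mem_sup.1 hxtop
  have hda : ⁅d, a⁆ ∈ s.toSubmodule := by
    rw [← lie_skew]
    exact neg_mem (adNontrivPart_le_adNontrivSubalgebra _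
      (lie_mem_adNontrivPart hsemisimple ha hd))
  rw [lie_add, add_lie c d a]
  exact add_mem (add_mem (Submodule.mem_sup_left (r.lie_mem hc ha)) (Submodule.mem_sup_right hda))
    (Submodule.mem_sup_right ((s.mem_normalizer_iff _).1 hxs b hb))
end
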